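/- arXiv:2310.16475 — 5 statements merged into one kernel-verified Lean document; each statement's English description precedes it below -/
import Mathlib

section
/- Let s, t, t' be real numbers with s > 0, t > 0 and t' ≥ 0, let n1, n2, n3 be positive integers and n4 a nonnegative integer. Then it is impossible that both n2·(s + t') − n3·n2·t + s·n4 ≤ 0 and n3·(s + t·n1) + (n4 + n2)·s − t'·n1 ≤ 0 hold; equivalently, n2·(s + t') − n3·n2·t + s·n4 > 0 or n3·(s + t·n1) + (n4 + n2)·s − t'·n1 > 0. -/
/-- The contradiction at the heart of the contiguity proof for optimal SSFS schedules:
at least one of the two rearrangements strictly decreases the total response time, i.e.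
`T1 − T2 > 0` or `T1 − T3 > 0`. -/
theorem stmt_2 (s t t' : ℝ) (hs : 0 < s) (ht : 0 < t) (ht' : 0 ≤ t')
    (n1 n2 n3 : ℕ) (hn1 : 0 < n1) (hn2 : 0 < n2) (hn3 : 0 < n3) (n4 : ℕ) :
    (n2 : ℝ) * (s + t') - (n3 : ℝ) * n2 * t + s * n4 > 0 ∨
      (n3 : ℝ) * (s + t * n1) + ((n4 : ℝ) + n2) * s - t' * n1 > 0 := by
  have h1 : (0 : ℝ) < n1 := by exact_mod_cast hn1
  have h2 : (0 : ℝ) < n2 := by exact_mod_cast hn2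
  have h3 : (0 : ℝ) < n3 := by exact_mod_cast hn3
  have h4 : (0 : ℝ) ≤ n4 := Nat.cast_nonneg n4
  have a2 := mul_pos h2 hs
  have a3 := mul_pos h3 hs
  have a4 := mul_nonneg h4 hs.le
  rcases le_total ((n3 : ℝ) * t) t' with h | h
  · left
    have := mul_nonneg h2.le (sub_nonneg.2 h)
    linarith
  · right
    have := mul_nonneg h1.le (sub_nonneg.2 h)
    linarith
end

section
/- Define the cost of a finite list L of pairs of real numbers by C(L) = Σ over all ordered index pairs i < k of (first component of L_k)·(second component of L_i). Then for any lists P and Q and any pairs a = (n_a, D_a) and b = (n_b, D_b), C(P ++ [a, b] ++ Q) − C(P ++ [b, a] ++ Q) = n_b·D_a − n_a·D_b. -/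
open Finset in
/-- Order-dependent part of the total response time of a block schedule:
`C(L) = Σ_{i<k} (L_k).1 · (L_i).2`. -/
noncomputable def pairCost (L : List (ℝ × ℝ)) : ℝ :=
  ∑ k ∈ Finset.range L.length, ∑ i ∈ Finset.range k,
    (L.getD k (0, 0)).1 * (L.getD i (0, 0)).2

theorem sum_getD_fst (L : List (ℝ × ℝ)) :
    ∑ k ∈ Finset.range L.length, (L.getD k (0, 0)).1 = (L.map Prod.fst).sum := by
  induction L with
  | nil => simp
  | cons x L ih =>
    rw [List.length_cons, Finset.sum_range_succ']
    simp only [List.getD_cons_succ, List.getD_cons_zero, List.map_cons, List.sum_cons, ih]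
    ring

theorem pairCost_cons (x : ℝ × ℝ) (L : List (ℝ × ℝ)) :
    pairCost (x :: L) = pairCost L + (L.map Prod.fst).sum * x.2 := by
  unfold pairCost
  rw [List.length_cons, Finset.sum_range_succ']
  simp only [Finset.sum_range_succ', List.getD_cons_succ, List.getD_cons_zero,
    Finset.sum_range_zero, add_zero, Finset.sum_add_distrib]
  rw [← sum_getD_fst, Finset.sum_mul]

/-- Swapping two adjacent blocks `a = (n_a, D_a)` and `b = (n_b, D_b)` changes the
cost by exactly `n_b·D_a − n_a·D_b`, independently of the surrounding lists. -/
theorem stmt_5 (P Q : List (ℝ × ℝ)) (na Da nb Db : ℝ) :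
    pairCost (P ++ [(na, Da), (nb, Db)] ++ Q) - pairCost (P ++ [(nb, Db), (na, Da)] ++ Q)
      = nb * Da - na * Db := by
  induction P with
  | nil =>
    simp only [List.nil_append, List.cons_append, pairCost_cons, List.map_cons, List.sum_cons]
    ring
  | cons x P ih =>
    simp only [List.cons_append, pairCost_cons, List.map_append, List.sum_append,
      List.map_cons, List.sum_cons] at ih ⊢
    linarith
end

section
/- Define the cost of a finite list L of pairs of real numbers by C(L) = Σ over all ordered index pairs i < k of (first component of L_k)·(second component of L_i). Let a = (n_a, D_a) and b = (n_b, D_b) be pairs with n_a, n_b > 0, and suppose D_a/n_a < D_b/n_b. Then for any lists P and Q, C(P ++ [a, b] ++ Q) < C(P ++ [b, a] ++ Q). -/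
theorem sum_snd_getD (L : List (ℝ × ℝ)) :
    ∑ i ∈ Finset.range L.length, (L.getD i (0, 0)).2 = (L.map Prod.snd).sum := by
  induction L with
  | nil => simp
  | cons x L ih =>
    rw [List.length_cons, Finset.sum_range_succ']
    simp only [List.getD_cons_succ, List.getD_cons_zero, List.map_cons, List.sum_cons]
    rw [ih, add_comm]

theorem pairCost_snoc (L : List (ℝ × ℝ)) (x : ℝ × ℝ) :
    pairCost (L ++ [x]) = pairCost L + x.1 * (L.map Prod.snd).sum := by
  have hlt : ∀ i, i < L.length → (L ++ [x]).getD i (0, 0) = L.getD i (0, 0) :=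
    fun i hi => List.getD_append _ _ _ _ hi
  have hx : (L ++ [x]).getD L.length (0, 0) = x := by simp
  unfold pairCost
  rw [List.length_append, List.length_singleton, Finset.sum_range_succ, hx, ← sum_snd_getD,
    Finset.mul_sum]
  congr 1
  · refine Finset.sum_congr rfl fun k hk => Finset.sum_congr rfl fun i hi => ?_
    rw [Finset.mem_range] at hk hi
    rw [hlt k hk, hlt i (hi.trans hk)]
  · refine Finset.sum_congr rfl fun i hi => ?_
    rw [hlt i (Finset.mem_range.1 hi)]

/-- Placing a block of strictly smaller weight `D_a/n_a` before an adjacent block of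
strictly larger weight `D_b/n_b` strictly decreases the cost. -/
theorem stmt_6 (na Da nb Db : ℝ) (hna : 0 < na) (hnb : 0 < nb)
    (hw : Da / na < Db / nb) (P Q : List (ℝ × ℝ)) :
    pairCost (P ++ [(na, Da), (nb, Db)] ++ Q) < pairCost (P ++ [(nb, Db), (na, Da)] ++ Q) := by
  have h : Da * nb < Db * na := (div_lt_div_iff₀ hna hnb).1 hw
  induction Q using List.reverseRecOn with
  | nil =>
    have e : ∀ x y : ℝ × ℝ, P ++ [x, y] ++ [] = (P ++ [x]) ++ [y] := by simp
    rw [e, e]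
    simp only [pairCost_snoc, List.map_append, List.sum_append, List.map_cons, List.map_nil,
      List.sum_cons, List.sum_nil]
    linarith
  | append_singleton Q x ih =>
    rw [← List.append_assoc, ← List.append_assoc, pairCost_snoc, pairCost_snoc]
    have e : ((P ++ [(na, Da), (nb, Db)] ++ Q).map Prod.snd).sum
        = ((P ++ [(nb, Db), (na, Da)] ++ Q).map Prod.snd).sum := by
      simp only [List.map_append, List.sum_append, List.map_cons, List.map_nil,
        List.sum_cons, List.sum_nil]
      ring
    rw [e]
    linarith
end

section
/- Consider a schedule given by a finite list l over labels {1,…,m} in which label j occurs exactly n_j ≥ 1 times; each item with label j has processing duration t_j > 0, and additionally a setup time s_j > 0 is incurred by every item that starts a new run of its label (i.e., the item is first in the list or its label differs from the preceding item's label); the completion time of the k-th item is the sum of the durations (including setups) of items 1 through k, and the total response time T(l) is the sum of the completion times of all items. If l minimizes T among all lists with the same label multiset (n_j occurrences of each label j), then for every label j the occurrences of j in l are contiguous (they form a single run). -/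
/-- Durations of the items of a schedule (a list of labels): an item of label `j` takes
time `t j`, plus its setup time `s j` whenever it starts a new run of its label, i.e. the
previous item (tracked by `prev`, initially `none`) does not have the same label. -/
def durList {m : ℕ} (t s : Fin m → ℝ) : Option (Fin m) → List (Fin m) → List ℝ
  | _, [] => []
  | prev, a :: rest => (t a + if prev = some a then 0 else s a) :: durList t s (some a) rest

/-- Sum of the completion times of all items, given the list of item durations:
the `k`-th completion time is the sum of durations of items `1..k`, so each duration
is counted once for itself and once for every later item. -/
def sumCompletions : List ℝ → ℝ
  | [] => 0
  | x :: xs => x * (xs.length + 1) + sumCompletions xs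

/-- Total response time `T(l)` of a schedule `l`: sum of the completion times of all items. -/
def totalResponse {m : ℕ} (t s : Fin m → ℝ) (l : List (Fin m)) : ℝ :=
  sumCompletions (durList t s none l)

def lastSt {m : ℕ} (p : Option (Fin m)) : List (Fin m) → Option (Fin m)
  | [] => p
  | a :: r => lastSt (some a) r

lemma durList_len {m : ℕ} (t s : Fin m → ℝ) (x : List (Fin m)) :
    ∀ p, (durList t s p x).length = x.length := by
  induction x with
  | nil => intro p; simp [durList]
  | cons a r ih => intro p; simp [durList, ih]

lemma sc_append {m : ℕ} (t s : Fin m → ℝ) (y x : List (Fin m)) :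
    ∀ p, sumCompletions (durList t s p (x ++ y)) = sumCompletions (durList t s p x)
      + (durList t s p x).sum * y.length + sumCompletions (durList t s (lastSt p x) y) := by
  induction x with
  | nil => intro p; simp [durList, lastSt, sumCompletions]
  | cons a r ih =>
    intro p
    simp only [List.cons_append, durList, sumCompletions, ih, lastSt, durList_len, List.sum_cons,
      List.length_append]
    push_cast
    ring

lemma lastSt_ne {m : ℕ} (j : Fin m) (x : List (Fin m)) :
    ∀ p, p ≠ some j → j ∉ x → lastSt p x ≠ some j := by
  induction x with
  | nil => intro p h _; simpa [lastSt] using h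
  | cons a r ih =>
    intro p _ h
    simp only [List.mem_cons, not_or] at h
    exact ih _ (by simpa using Ne.symm h.1) h.2

lemma lastSt_ne' {m : ℕ} (j : Fin m) (x : List (Fin m)) (p) (hx : x ≠ []) (h : j ∉ x) :
    lastSt p x ≠ some j := by
  cases x with
  | nil => exact absurd rfl hx
  | cons a r =>
    simp only [List.mem_cons, not_or] at h
    exact lastSt_ne j r _ (by simpa using Ne.symm h.1) h.2

lemma lastSt_rep {m : ℕ} (j : Fin m) (b : ℕ) :
    lastSt (some j) (List.replicate b j) = some j := by
  induction b with
  | zero => rfl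
  | succ b ih => simpa [List.replicate_succ, lastSt] using ih

lemma sum_rep {m : ℕ} (t s : Fin m → ℝ) (j : Fin m) (b : ℕ) :
    (durList t s (some j) (List.replicate b j)).sum = b * t j := by
  induction b with
  | zero => simp [durList]
  | succ b ih => simp [List.replicate_succ, durList, ih]; ring

lemma sc_mono {m : ℕ} (t s : Fin m → ℝ) (hs : ∀ j, 0 < s j) (j : Fin m) (x : List (Fin m))
    (p) (h : j ∉ x) :
    sumCompletions (durList t s p x) ≤ sumCompletions (durList t s (some j) x) ∧
    (durList t s p x).sum ≤ (durList t s (some j) x).sum := by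
  cases x with
  | nil => simp [durList]
  | cons a r =>
    simp only [List.mem_cons, not_or] at h
    have h1 : (some j = some a) = False := by simpa using h.1
    have h2 : (if p = some a then 0 else s a) ≤ s a := by
      split_ifs
      · exact (hs a).le
      · exact le_rfl
    simp only [durList, sumCompletions, List.sum_cons, h1, if_false]
    constructor <;> gcongr

lemma sc_any {m : ℕ} (t s : Fin m → ℝ) (hs : ∀ j, 0 < s j) (j : Fin m) (x : List (Fin m)) (p) :
    sumCompletions (durList t s p x) ≤ sumCompletions (durList t s (some j) x)
      + s j * x.length := by
  cases x with
  | nil => simp [durList]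
  | cons a r =>
    have h2 : (if p = some a then 0 else s a) ≤ s a := by
      split_ifs
      · exact (hs a).le
      · exact le_rfl
    have h3 : (t a + if p = some a then 0 else s a)
        ≤ (t a + if some j = some a then 0 else s a) + s j := by
      by_cases h : j = a
      · subst h; simp; simpa using h2
      · have := hs j
        simp [h]; linarith
    simp only [durList, sumCompletions, durList_len, List.length_cons]
    push_cast
    have h4 : (0:ℝ) ≤ r.length + 1 := by positivity
    nlinarith [mul_le_mul_of_nonneg_right h3 h4]

lemma run_decomp {m : ℕ} (j : Fin m) (R : List (Fin m)) :
    ∃ b R', R = List.replicate b j ++ R' ∧ ∀ x, R' ≠ j :: x := by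
  induction R with
  | nil => exact ⟨0, [], by simp, by simp⟩
  | cons a r ih =>
    by_cases h : a = j
    · obtain ⟨b, R', h1, h2⟩ := ih
      exact ⟨b + 1, R', by rw [h, List.replicate_succ, List.cons_append, ← h1], h2⟩
    · exact ⟨0, a :: r, by simp, by simp [h]⟩

/-- First part of the SSFS optimality theorem: in a schedule minimizing the total
response time among all schedules with the same label multiset (`n j` items of each
label `j`), the occurrences of every label are contiguous. -/
theorem stmt_9 {m : ℕ} (t s : Fin m → ℝ) (n : Fin m → ℕ)
    (ht : ∀ j, 0 < t j) (hs : ∀ j, 0 < s j) (hn : ∀ j, 1 ≤ n j)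
    (l : List (Fin m)) (hcount : ∀ j, l.count j = n j)
    (hopt : ∀ l' : List (Fin m), (∀ j, l'.count j = n j) →
      totalResponse t s l ≤ totalResponse t s l') :
    ∀ j : Fin m, ∃ p q : List (Fin m),
      l = p ++ List.replicate (n j) j ++ q ∧ j ∉ p ∧ j ∉ q := by
  intro j
  have hj : j ∈ l := by
    rw [← List.count_pos_iff, hcount]; exact hn j
  obtain ⟨P, R, hl, hP⟩ := List.eq_append_cons_of_mem hj
  obtain ⟨b, R', hR, hR'⟩ := run_decomp j R
  by_cases hjR : j ∈ R'
  swap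
  · have hc := hcount j
    rw [hl, hR] at hc
    simp [List.count_eq_zero_of_not_mem hP, List.count_eq_zero_of_not_mem hjR] at hc
    refine ⟨P, R', ?_, hP, hjR⟩
    rw [hl, hR, ← hc, List.replicate_succ]
    simp
  exfalso
  obtain ⟨M, Q, hM, hjM⟩ := List.eq_append_cons_of_mem hjR
  have hM0 : M ≠ [] := by
    rintro rfl
    exact hR' Q (by simpa using hM)
  subst hM
  subst hR
  have e1 := hopt (P ++ (j :: (List.replicate b j ++ (j :: (M ++ Q))))) (by
    intro i; rw [← hcount i, hl]; simp [List.count_cons]; ring)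
  have e2 := hopt (P ++ (M ++ (j :: (List.replicate b j ++ (j :: Q))))) (by
    intro i; rw [← hcount i, hl]; simp [List.count_cons]; ring)
  rw [hl] at e1 e2
  have hp : lastSt none P ≠ some j := lastSt_ne j P none (by simp) hP
  have he : ∀ p, lastSt p M ≠ some j := fun p => lastSt_ne' j M p hM0 hjM
  simp only [totalResponse, sc_append, durList, sumCompletions, durList_len, lastSt_rep, sum_rep,
    hp, he, if_true, if_false, List.length_append, List.length_cons, List.length_replicate] at e1 e2
  push_cast at e1 e2
  obtain ⟨m1, m2⟩ := sc_mono t s hs j M (lastSt none P) hjM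
  have m3 := sc_any t s hs j Q (lastSt (some j) M)
  have hsj := hs j
  generalize sumCompletions (durList t s (lastSt (some j) M) Q) = c1 at *
  generalize sumCompletions (durList t s (some j) Q) = c2 at *
  generalize sumCompletions (durList t s (lastSt none P) M) = c3 at *
  generalize sumCompletions (durList t s (some j) M) = c4 at *
  generalize (durList t s (lastSt none P) M).sum = d3 at *
  generalize (durList t s (some j) M).sum = d4 at *
  have hb : (0:ℝ) ≤ b := by positivity
  have hk : (0:ℝ) ≤ M.length := by positivity
  have hq : (0:ℝ) ≤ Q.length := by positivity
  generalize (b:ℝ) = b at *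
  generalize (M.length:ℝ) = k at *
  generalize (Q.length:ℝ) = q at *
  have f1 : 0 ≤ t j * k - d4 - s j := by linarith
  have m2' := mul_le_mul_of_nonneg_right m2 (show 0 ≤ b + 1 + 1 + q by positivity)
  have f2 : 0 ≤ d4 * (b + 1) - ((b + 1) * t j + s j) * k - s j * (1 + q) := by linarith
  have f3 := mul_nonneg f1 (show 0 ≤ b + 1 by positivity)
  have g1 := mul_nonneg hsj.le hb
  have g2 := mul_nonneg hsj.le hk
  have g3 := mul_nonneg hsj.le hq
  linarith
end

section
/- Consider schedules given by finite lists l over labels {1,…,m} in which label j occurs exactly n_j ≥ 1 times; each item with label j has processing duration t_j > 0, and additionally a setup time s_j > 0 is incurred by every item that starts a new run of its label (i.e., the item is first in the list or its label differs from the preceding item's label); the completion time of the k-th item is the sum of the durations (including setups) of items 1 through k, and the total response time T(l) is the sum of the completion times of all items. Define the weight w_j = t_j + s_j/n_j. Let l* be the schedule consisting of m contiguous blocks, block j containing all n_j occurrences of label j, with the blocks arranged in nondecreasing order of w_j. Then T(l*) ≤ T(l) for every schedule l with the same label multiset. -/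
def qCount {m : ℕ} (j : Fin m) : List (Fin m) → ℝ
  | [] => 0
  | a :: l => (if a = j then (l.length + 1 : ℝ) else 0) + qCount j l

def dCount {m : ℕ} (j : Fin m) : List (Fin m) → ℝ
  | [] => 0
  | a :: l => if a = j then (l.length + 1 : ℝ) else dCount j l

theorem durList_length {m : ℕ} (t s : Fin m → ℝ) (l : List (Fin m)) :
    ∀ p, (durList t s p l).length = l.length := by
  induction l with
  | nil => intro p; simp [durList]
  | cons a l ih => intro p; simp [durList, ih]

theorem dCount_nonneg {m : ℕ} (j : Fin m) (l : List (Fin m)) : 0 ≤ dCount j l := by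
  induction l with
  | nil => simp [dCount]
  | cons a l ih => rw [dCount]; split_ifs <;> positivity

theorem qCount_le {m : ℕ} (j : Fin m) (l : List (Fin m)) :
    qCount j l + (l.count j : ℝ) * ((l.count j : ℝ) - 1) / 2 ≤ (l.count j : ℝ) * l.length := by
  induction l with
  | nil => simp [qCount]
  | cons a l ih =>
    rw [qCount]
    by_cases h : a = j
    · subst h
      simp only [if_true, List.count_cons_self, List.length_cons]
      push_cast
      nlinarith
    · simp only [if_neg h, List.count_cons_of_ne h, List.length_cons]
      push_cast
      nlinarith [(Nat.cast_nonneg (l.count j) : (0:ℝ) ≤ _)]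

theorem qCount_le_d {m : ℕ} (j : Fin m) (l : List (Fin m)) :
    qCount j l + (l.count j : ℝ) * ((l.count j : ℝ) - 1) / 2 ≤ (l.count j : ℝ) * dCount j l := by
  induction l with
  | nil => simp [qCount]
  | cons a l ih =>
    rw [qCount, dCount]
    by_cases h : a = j
    · subst h
      have := qCount_le a l
      simp only [if_true, List.count_cons_self]
      push_cast
      nlinarith
    · simp only [if_neg h, List.count_cons_of_ne h]
      linarith

theorem sum_qCount {m : ℕ} (w : Fin m → ℝ) (l : List (Fin m)) :
    sumCompletions (l.map w) = ∑ j, w j * qCount j l := by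
  induction l with
  | nil => simp [sumCompletions, qCount]
  | cons a l ih =>
    simp [sumCompletions, qCount, ih, mul_add, Finset.sum_add_distrib]

theorem lower1 {m : ℕ} (t s : Fin m → ℝ) (hs : ∀ j, 0 < s j) (l : List (Fin m)) :
    ∀ p : Option (Fin m),
    sumCompletions (l.map t) + ∑ j, (if p = some j then 0 else s j * dCount j l) ≤
      sumCompletions (durList t s p l) := by
  induction l with
  | nil => intro p; simp [sumCompletions, durList, dCount]
  | cons a l ih =>
    intro p
    have h1 := ih (some a)
    simp only [List.map_cons, durList, sumCompletions, durList_length, List.length_map]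
    have h2 : ∑ j, (if p = some j then 0 else s j * dCount j (a :: l)) ≤
        (if p = some a then 0 else s a) * ((l.length : ℝ) + 1) +
        ∑ j, (if some a = some j then 0 else s j * dCount j l) := by
      have h3 : (if p = some a then 0 else s a) * ((l.length : ℝ) + 1) =
        ∑ j, if a = j then (if p = some a then 0 else s a) * ((l.length : ℝ) + 1) else 0 := by
        simp
      rw [h3, ← Finset.sum_add_distrib]
      apply Finset.sum_le_sum
      intro j _
      have hd := mul_nonneg (hs j).le (dCount_nonneg j l)
      by_cases h : a = j
      · subst h
        simp [dCount]
      · simp only [dCount, if_neg h, Option.some.injEq]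
        split_ifs <;> linarith
    linarith

theorem lower2 {m : ℕ} (t s : Fin m → ℝ) (n : Fin m → ℕ)
    (hs : ∀ j, 0 < s j) (hn : ∀ j, 1 ≤ n j) (l : List (Fin m)) (hl : ∀ j, l.count j = n j) :
    sumCompletions (l.map fun j => t j + s j / (n j : ℝ)) + ∑ j, s j * ((n j : ℝ) - 1) / 2
      ≤ totalResponse t s l := by
  refine le_trans ?_ (lower1 t s hs l none)
  rw [sum_qCount, sum_qCount, ← Finset.sum_add_distrib, ← Finset.sum_add_distrib]
  apply Finset.sum_le_sum
  intro j _
  have h := qCount_le_d j l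
  rw [hl] at h
  have hp : (0:ℝ) < n j := by exact_mod_cast hn j
  have h2 := mul_le_mul_of_nonneg_left h (div_pos (hs j) hp).le
  have h3 : s j / n j * (n j * dCount j l) = s j * dCount j l := by field_simp
  have h4 : s j / n j * (qCount j l + n j * ((n j : ℝ) - 1) / 2)
    = s j / n j * qCount j l + s j * ((n j : ℝ) - 1) / 2 := by field_simp
  simp only [reduceCtorEq, if_false]
  linarith

theorem map_replicate_append {m : ℕ} (w : Fin m → ℝ) (a : Fin m) (r : List (Fin m)) (k : ℕ) :
    sumCompletions ((List.replicate k a ++ r).map w) =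
      w a * (k * r.length + k * (k + 1) / 2) + sumCompletions (r.map w) := by
  induction k with
  | zero => simp
  | succ k ih =>
    rw [List.replicate_succ, List.cons_append, List.map_cons, sumCompletions, ih]
    simp only [List.length_map, List.length_append, List.length_replicate]
    push_cast
    ring

theorem dur_replicate_append {m : ℕ} (t s : Fin m → ℝ) (a : Fin m) (r : List (Fin m)) (k : ℕ) :
    sumCompletions (durList t s (some a) (List.replicate k a ++ r)) =
      t a * (k * r.length + k * (k + 1) / 2) + sumCompletions (durList t s (some a) r) := by
  induction k with
  | zero => simp
  | succ k ih =>
    rw [List.replicate_succ, List.cons_append, durList, sumCompletions, ih]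
    simp only [durList_length, List.length_append, List.length_replicate]
    push_cast
    simp
    ring

theorem blocks_eq {m : ℕ} (t s : Fin m → ℝ) (n : Fin m → ℕ) (hn : ∀ j, 1 ≤ n j)
    (ks : List (Fin m)) : ks.Nodup → ∀ p : Option (Fin m), (∀ a ∈ ks, p ≠ some a) →
    sumCompletions (durList t s p (ks.flatMap fun k => List.replicate (n k) k)) =
    sumCompletions ((ks.flatMap fun k => List.replicate (n k) k).map fun j => t j + s j / (n j : ℝ))
      + (ks.map fun j => s j * ((n j : ℝ) - 1) / 2).sum := by
  induction ks with
  | nil => intro _ p _; simp [durList, sumCompletions]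
  | cons a ks ih =>
    intro hnd p hp
    rw [List.nodup_cons] at hnd
    have ih' := ih hnd.2 (some a) (by
      intro b hb h
      cases h
      exact hnd.1 hb)
    have hpa : p ≠ some a := hp a (by simp)
    rw [List.flatMap_cons, map_replicate_append]
    generalize (ks.flatMap fun k => List.replicate (n k) k) = r at *
    have hpos : (0:ℝ) < n a := by exact_mod_cast hn a
    have key : sumCompletions (durList t s p (List.replicate (n a) a ++ r)) =
        s a * (n a + r.length) +
        sumCompletions (durList t s (some a) (List.replicate (n a) a ++ r)) := by
      obtain ⟨k, hk⟩ : ∃ k, n a = k + 1 := ⟨n a - 1, by have := hn a; omega⟩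
      rw [hk, List.replicate_succ, List.cons_append, durList, durList, sumCompletions,
        sumCompletions]
      simp only [durList_length, List.length_append, List.length_replicate, if_neg hpa, if_true]
      push_cast
      ring
    rw [key, dur_replicate_append, ih', List.map_cons, List.sum_cons]
    field_simp
    ring

theorem erase_le (a : ℝ) (l : List ℝ) : a ∈ l → (∀ b ∈ l, a ≤ b) →
    sumCompletions (a :: l.erase a) ≤ sumCompletions l := by
  induction l with
  | nil => simp
  | cons b l ih =>
    intro hm hb
    by_cases h : b = a
    · subst h; simp
    · have hm' : a ∈ l := by
        rcases List.mem_cons.1 hm with h' | h'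
        · exact absurd h'.symm h
        · exact h'
      have ih' := ih hm' (fun c hc => hb c (List.mem_cons_of_mem _ hc))
      have hab := hb b (by simp)
      have hlen : ((l.erase a).length : ℝ) + 1 = l.length := by
        exact_mod_cast List.length_erase_add_one hm'
      rw [List.erase_cons_tail (by simpa using h)]
      simp only [sumCompletions, List.length_cons] at *
      push_cast
      rw [hlen] at ih' ⊢
      nlinarith

theorem sorted_le (l1 : List ℝ) : l1.Pairwise (· ≤ ·) → ∀ l2, l1.Perm l2 →
    sumCompletions l1 ≤ sumCompletions l2 := by
  induction l1 with
  | nil => intro _ l2 h; rw [List.nil_perm.1 h]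
  | cons a l ih =>
    intro hp l2 h
    rw [List.pairwise_cons] at hp
    have hm : a ∈ l2 := h.subset (by simp)
    refine le_trans ?_ (erase_le a l2 hm ?_)
    · have h2 : l.Perm (l2.erase a) := by simpa using h.erase a
      have := ih hp.2 _ h2
      simp only [sumCompletions, h2.length_eq]
      linarith
    · intro b hb
      rcases List.mem_cons.1 (h.symm.subset hb) with rfl | h'
      · exact le_rfl
      · exact hp.1 b h'

/-- Full SSFS optimality theorem: the schedule consisting of `m` contiguous blocks
(block `j` containing all `n j` occurrences of label `j`) arranged, via the
permutation `σ`, in nondecreasing order of weight `w_j = t_j + s_j/n_j`, minimizes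
the total response time among all schedules with the same label multiset. -/
theorem stmt_10 {m : ℕ} (t s : Fin m → ℝ) (n : Fin m → ℕ)
    (ht : ∀ j, 0 < t j) (hs : ∀ j, 0 < s j) (hn : ∀ j, 1 ≤ n j)
    (σ : Equiv.Perm (Fin m))
    (hsorted : ∀ i j : Fin m, i ≤ j →
      t (σ i) + s (σ i) / (n (σ i) : ℝ) ≤ t (σ j) + s (σ j) / (n (σ j) : ℝ)) :
    ∀ l : List (Fin m), (∀ j, l.count j = n j) →
      totalResponse t s ((List.finRange m).flatMap fun k => List.replicate (n (σ k)) (σ k))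
        ≤ totalResponse t s l := by
  intro l hl
  refine le_trans ?_ (lower2 t s n hs hn l hl)
  have e : ((List.finRange m).flatMap fun k => List.replicate (n (σ k)) (σ k)) =
      ((List.finRange m).map σ).flatMap fun k => List.replicate (n k) k := by
    rw [List.flatMap_map]
  have hb := blocks_eq t s n hn ((List.finRange m).map σ)
    ((List.nodup_finRange m).map σ.injective) none (by simp)
  rw [← e, List.map_map, ← Fin.sum_univ_def] at hb
  have hC : ∑ i, ((fun j => s j * ((n j : ℝ) - 1) / 2) ∘ σ) i = ∑ j, s j * ((n j : ℝ) - 1) / 2 :=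
    Equiv.sum_comp σ (fun j => s j * ((n j : ℝ) - 1) / 2)
  rw [hC] at hb
  rw [totalResponse, hb]
  gcongr
  apply sorted_le
  · rw [List.pairwise_map, List.pairwise_flatMap]
    refine ⟨fun a _ => ?_, ?_⟩
    · rw [List.pairwise_replicate]
      right; exact le_rfl
    · refine (List.pairwise_le_finRange m).imp ?_
      intro i j hij x hx y hy
      rw [List.eq_of_mem_replicate hx, List.eq_of_mem_replicate hy]
      exact hsorted i j hij
  · apply List.Perm.map
    rw [List.perm_iff_count]
    intro j
    rw [hl, List.count_flatMap, ← Fin.sum_univ_def]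
    have : ∀ k, (List.count j ∘ fun k => List.replicate (n (σ k)) (σ k)) k
        = (fun i => if i = j then n i else 0) (σ k) := by
      intro k
      simp [List.count_replicate]
    rw [Finset.sum_congr rfl (fun k _ => this k), Equiv.sum_comp σ (fun i => if i = j then n i else 0)]
    simp
end
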